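/- Let n be a positive integer and D a symmetric n×n real matrix. Suppose q, p, w₁ : ℝ → ℝⁿ are differentiable and satisfy for all t the lifted FOM of the nonlinear wave equation with exponential nonlinearity: q′ = p, p′ = Dq + (w₁ ⊙ w₁), w₁′ = −½ (w₁ ⊙ p). Then the lifted energy t ↦ ½ p(t)ᵀp(t) − ½ q(t)ᵀD q(t) + w₁(t)ᵀw₁(t) is constant in t. -/

import Mathlib

/-!
Differentiating the energy along a solution gives, using the symmetry of `D`,
`p ⬝ ṗ - p ⬝ D q + 2 w₁ ⬝ ẇ₁`. Substituting the equations of motion, the terms `p ⬝ D q` cancel,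
and so do the remaining terms `p ⬝ (w₁ ⊙ w₁)` and `w₁ ⬝ (w₁ ⊙ p)`. A function on `ℝ` with
vanishing derivative is constant.
-/

open Matrix BigOperators

lemma hasDerivAt_dotProduct {n : ℕ} {u v : ℝ → Fin n → ℝ} {u' v' : Fin n → ℝ} {t : ℝ}
    (hu : HasDerivAt u u' t) (hv : HasDerivAt v v' t) :
    HasDerivAt (fun s => u s ⬝ᵥ v s) (u' ⬝ᵥ v t + u t ⬝ᵥ v') t := by
  have h := HasDerivAt.fun_sum (u := Finset.univ) fun i _ =>
    (hasDerivAt_pi.1 hu i).fun_mul (hasDerivAt_pi.1 hv i)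
  simpa only [dotProduct, Finset.sum_add_distrib] using h

lemma hasDerivAt_mulVec {n : ℕ} (D : Matrix (Fin n) (Fin n) ℝ) {v : ℝ → Fin n → ℝ}
    {v' : Fin n → ℝ} {t : ℝ} (hv : HasDerivAt v v' t) :
    HasDerivAt (fun s => D.mulVec (v s)) (D.mulVec v') t := by
  refine hasDerivAt_pi.2 fun i => ?_
  simpa [mulVec] using hasDerivAt_dotProduct (hasDerivAt_const t (D i)) hv

/-- Energy conservation of the lifted FOM of the nonlinear wave equation with
exponential nonlinearity. -/
theorem exp_wave_lifted_fom_conserves_energy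
    (n : ℕ) (hn : 0 < n)
    (D : Matrix (Fin n) (Fin n) ℝ) (hD : D.IsSymm)
    (q p w1 : ℝ → Fin n → ℝ)
    (hq : ∀ t, HasDerivAt q (p t) t)
    (hp : ∀ t, HasDerivAt p (D.mulVec (q t) + fun i => w1 t i * w1 t i) t)
    (hw1 : ∀ t, HasDerivAt w1 (-((1 / 2 : ℝ) • fun i => w1 t i * p t i)) t) :
    ∀ s t : ℝ,
      (1 / 2) * (p s ⬝ᵥ p s) - (1 / 2) * (q s ⬝ᵥ D.mulVec (q s)) + (w1 s ⬝ᵥ w1 s)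
      = (1 / 2) * (p t ⬝ᵥ p t) - (1 / 2) * (q t ⬝ᵥ D.mulVec (q t)) + (w1 t ⬝ᵥ w1 t) := by
  have key : ∀ t, HasDerivAt (fun s => (1 / 2) * (p s ⬝ᵥ p s)
      - (1 / 2) * (q s ⬝ᵥ D.mulVec (q s)) + (w1 s ⬝ᵥ w1 s)) 0 t := by
    intro t
    have h := (((hasDerivAt_dotProduct (hp t) (hp t)).const_mul (1 / 2)).fun_sub
      ((hasDerivAt_dotProduct (hq t) (hasDerivAt_mulVec D (hq t))).const_mul (1 / 2))).fun_add
      (hasDerivAt_dotProduct (hw1 t) (hw1 t))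
    have hsymm : q t ⬝ᵥ D.mulVec (p t) = p t ⬝ᵥ D.mulVec (q t) := by
      rw [dotProduct_mulVec, ← mulVec_transpose, hD.eq, dotProduct_comm]
    have hcubic : (w1 t ⬝ᵥ fun i => w1 t i * p t i) = p t ⬝ᵥ fun i => w1 t i * w1 t i :=
      Finset.sum_congr rfl fun i _ => by ring
    refine h.congr_deriv ?_
    rw [dotProduct_comm _ (p t), dotProduct_comm _ (w1 t), hsymm, dotProduct_add, dotProduct_neg,
      dotProduct_smul, hcubic, smul_eq_mul]
    ring
  exact is_const_of_deriv_eq_zero (fun t => (key t).differentiableAt) (fun t => (key t).deriv)
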